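/- Let μ be a probability mass function on T₁ with 0 < β := Σ_τ μ(τ)·deg(τ) < ∞, let η₁ be the law on T₁ with degree distribution Q and i.i.d. marks, where Q has finite nonzero mean, and assume μ is absolutely continuous with respect to η₁. Then μ is absolutely continuous with respect to μ̌ and μ is absolutely continuous with respect to μ̂ (i.e., μ̌(τ) = 0 implies μ(τ) = 0, and μ̂(τ) = 0 implies μ(τ) = 0, for every τ ∈ T₁). -/

import Mathlib

open scoped BigOperators ENNReal Classical

noncomputable section

/-- Depth-1 rooted marked trees: the root mark together with the multiset of
(vertex mark, edge mark toward the root, edge mark at the root) triples of the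
neighbors of the root. -/
abbrev T1 (𝒳 𝒴 : Type) : Type := 𝒳 × Multiset (𝒳 × 𝒴 × 𝒴)

section Defs

variable {𝒳 𝒴 : Type} [Fintype 𝒳] [Fintype 𝒴] [DecidableEq 𝒳] [DecidableEq 𝒴]

/-- Degree of the root of a depth-1 tree. -/
def deg (τ : T1 𝒳 𝒴) : ℕ := Multiset.card τ.2

/-- Symmetrized edge-mark distribution `ξ̄(y, y') = (ξ(y, y') + ξ(y', y)) / 2`. -/
def xiBar (ξ : 𝒴 × 𝒴 → ℝ) (y y' : 𝒴) : ℝ := (ξ (y, y') + ξ (y', y)) / 2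

/-- Multinomial coefficient `card m ! / ∏ₛ (multiplicity of s in m)!`. -/
def ordCoeff (m : Multiset (𝒳 × 𝒴 × 𝒴)) : ℝ :=
  (Nat.factorial (Multiset.card m) : ℝ) /
    ∏ s ∈ m.toFinset, (Nat.factorial (m.count s) : ℝ)

/-- The law `η₁` on `T1` with root-degree distribution `Q` and i.i.d. marks:
`η₁ (x, m) = ν x · Q (card m) · (card m)!/∏ₛ count s !· ∏_{(a,y,y') ∈ m} ν a · ξ̄ y y'`. -/
def eta1 (ν : 𝒳 → ℝ) (ξ : 𝒴 × 𝒴 → ℝ) (Q : ℕ → ℝ) (τ : T1 𝒳 𝒴) : ℝ :=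
  ν τ.1 * Q (Multiset.card τ.2) * ordCoeff τ.2 *
    (τ.2.map fun p => ν p.1 * xiBar ξ p.2.1 p.2.2).prod

/-- Mean root degree `β = ∑_τ μ τ · deg τ`. -/
def meanDeg (μ : T1 𝒳 𝒴 → ℝ) : ℝ := ∑' τ : T1 𝒳 𝒴, μ τ * (deg τ : ℝ)

/-- The neighbor–root marginal `μ̄^{1,o}`:
`μ̄^{1,o} ((a,y), (b,y')) = (1/β) ∑_{m} μ (b, m) · (multiplicity of (a,y,y') in m)`. -/
def nbrRoot (μ : T1 𝒳 𝒴 → ℝ) (p : (𝒳 × 𝒴) × (𝒳 × 𝒴)) : ℝ :=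
  (1 / meanDeg μ) *
    ∑' m : Multiset (𝒳 × 𝒴 × 𝒴), μ (p.2.1, m) * (m.count (p.1.1, p.1.2, p.2.2) : ℝ)

/-- First marginal `μ̄¹` of `μ̄^{1,o}`. -/
def marg1 (μ : T1 𝒳 𝒴 → ℝ) (u : 𝒳 × 𝒴) : ℝ := ∑ v : 𝒳 × 𝒴, nbrRoot μ (u, v)

/-- Second marginal `μ̄ᵒ` of `μ̄^{1,o}`. -/
def margO (μ : T1 𝒳 𝒴 → ℝ) (v : 𝒳 × 𝒴) : ℝ := ∑ u : 𝒳 × 𝒴, nbrRoot μ (u, v)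

/-- Conditional law `μ̄^{1|o} (u | v) = μ̄^{1,o}(u,v) / μ̄ᵒ(v)` (and `0` if `μ̄ᵒ(v) = 0`). -/
def condNbr (μ : T1 𝒳 𝒴 → ℝ) (u v : 𝒳 × 𝒴) : ℝ :=
  if 0 < margO μ v then nbrRoot μ (u, v) / margO μ v else 0

/-- `μ̌ (x, m) = η₁ (x, m) · ∏_{(a,y,y') ∈ m} μ̄¹(a,y) / η̄₁¹(a,y)` (product with
multiplicity; in Lean a ratio with zero denominator is `0`). -/
def muCheck (ν : 𝒳 → ℝ) (ξ : 𝒴 × 𝒴 → ℝ) (Q : ℕ → ℝ) (μ : T1 𝒳 𝒴 → ℝ) (τ : T1 𝒳 𝒴) : ℝ :=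
  eta1 ν ξ Q τ *
    (τ.2.map fun p => marg1 μ (p.1, p.2.1) / marg1 (eta1 ν ξ Q) (p.1, p.2.1)).prod

/-- `μ̂ (x, m) = η₁ (x, m) · ∏_{(a,y,y') ∈ m} μ̄^{1|o}((a,y)|(x,y')) / η̄₁^{1|o}((a,y)|(x,y'))`
(product with multiplicity; a ratio with zero denominator is `0`). -/
def muHat (ν : 𝒳 → ℝ) (ξ : 𝒴 × 𝒴 → ℝ) (Q : ℕ → ℝ) (μ : T1 𝒳 𝒴 → ℝ) (τ : T1 𝒳 𝒴) : ℝ :=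
  eta1 ν ξ Q τ *
    (τ.2.map fun p =>
      condNbr μ (p.1, p.2.1) (τ.1, p.2.2) /
        condNbr (eta1 ν ξ Q) (p.1, p.2.1) (τ.1, p.2.2)).prod

end Defs

/-- Relative entropy `H(p ‖ q) = ∑ₛ p s * log (p s / q s)` of probability mass
functions, with value `∞` when `p` is not absolutely continuous with respect to `q`
(or the defining series diverges); `0·log 0 = 0` is automatic since `Real.log 0 = 0`. -/
def relEnt {S : Type*} (p q : S → ℝ) : ℝ≥0∞ :=
  if (∀ s, q s = 0 → p s = 0) ∧ Summable (fun s => p s * Real.log (p s / q s)) then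
    ENNReal.ofReal (∑' s, p s * Real.log (p s / q s))
  else ⊤

/-!
A law `μ` on `T1` charging `(x, m)` also charges, through its neighbor–root marginal, every
`((a, y), (x, y'))` with `(a, y, y') ∈ m`; finiteness of the mean degree is what makes this marginal
a convergent series. If `μ ≪ η`, this applies to both `μ` and `η` at each tree charged by `μ`, so
every likelihood ratio in the product reweighting `η` there has nonzero numerator and denominator.
For `η = η₁` the mean degree is finite because the multinomial theorem identifies the degree
distribution of `η₁` with `Q`.
-/

section Multisets

theorem mul_prod_map_div_ne_zero {α K : Type*} [CommGroupWithZero K] {c : K} {m : Multiset α}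
    {f g : α → K} (hc : c ≠ 0) (hf : ∀ s ∈ m, f s ≠ 0) (hg : ∀ s ∈ m, g s ≠ 0) :
    c * (m.map fun s ↦ f s / g s).prod ≠ 0 := by
  refine mul_ne_zero hc (Multiset.prod_ne_zero fun hzero ↦ ?_)
  obtain ⟨s, hs, hdiv⟩ := Multiset.mem_map.1 hzero
  exact div_ne_zero (hf s hs) (hg s hs) hdiv

theorem prod_factorial_count_mul_countPerms {α : Type*} [DecidableEq α] (m : Multiset α) :
    (∏ s ∈ m.toFinset, (m.count s).factorial) * m.countPerms = (Multiset.card m).factorial := by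
  have h := Nat.multinomial_spec m.toFinset fun s ↦ m.count s
  rwa [Multiset.toFinset_sum_count_eq] at h

variable {α : Type*} [Fintype α] [DecidableEq α]

theorem summable_mul_countPerms_mul_prod_map_iff {w : α → ℝ} (hw : ∀ a, 0 ≤ w a) {c : ℕ → ℝ}
    (hc : ∀ k, 0 ≤ c k) :
    (Summable fun m : Multiset α ↦ c (Multiset.card m) * (m.countPerms * (m.map w).prod)) ↔
      Summable fun k ↦ c k * (∑ a, w a) ^ k := by
  have fiber_hasSum (k : ℕ) : HasSum (fun s : Sym α k ↦
      c (Multiset.card s.1) * (s.1.countPerms * (s.1.map w).prod)) (c k * (∑ a, w a) ^ k) := by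
    rw [Finset.sum_pow, Finset.sym_univ, Finset.mul_sum]
    convert hasSum_fintype _ using 3 with s
    rw [s.2]
  rw [← (Equiv.sigmaFiberEquiv (Multiset.card (α := α))).summable_iff, summable_sigma_of_nonneg]
  · exact (and_iff_right fun k ↦ (fiber_hasSum k).summable).trans
      (summable_congr fun k ↦ (fiber_hasSum k).tsum_eq)
  · exact fun s ↦ mul_nonneg (hc _) (mul_nonneg (Nat.cast_nonneg _)
      (Multiset.prod_map_nonneg fun a _ ↦ hw a))

end Multisets

section Marginals

variable {𝒳 𝒴 : Type} {μ : T1 𝒳 𝒴 → ℝ}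

theorem meanDeg_nonneg (hμ : ∀ τ, 0 ≤ μ τ) : 0 ≤ meanDeg μ :=
  tsum_nonneg fun τ ↦ mul_nonneg (hμ τ) (Nat.cast_nonneg _)

theorem meanDeg_pos (hμ : ∀ τ, 0 ≤ μ τ) (hdeg : Summable fun τ ↦ μ τ * (deg τ : ℝ))
    {τ : T1 𝒳 𝒴} (hτ : 0 < μ τ) (hτdeg : 0 < deg τ) : 0 < meanDeg μ :=
  hdeg.tsum_pos (fun τ ↦ mul_nonneg (hμ τ) (Nat.cast_nonneg _)) τ
    (mul_pos hτ (Nat.cast_pos.2 hτdeg))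

variable [DecidableEq 𝒳] [DecidableEq 𝒴]

theorem summable_mul_count (hμ : ∀ τ, 0 ≤ μ τ) (hdeg : Summable fun τ ↦ μ τ * (deg τ : ℝ))
    (x : 𝒳) (s : 𝒳 × 𝒴 × 𝒴) :
    Summable fun m : Multiset (𝒳 × 𝒴 × 𝒴) ↦ μ (x, m) * (m.count s : ℝ) :=
  (hdeg.comp_injective (Prod.mk_right_injective x)).of_nonneg_of_le
    (fun _ ↦ mul_nonneg (hμ _) (Nat.cast_nonneg _))
    fun m ↦ mul_le_mul_of_nonneg_left (Nat.cast_le.2 (Multiset.count_le_card s m)) (hμ _)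

theorem nbrRoot_nonneg (hμ : ∀ τ, 0 ≤ μ τ) (p : (𝒳 × 𝒴) × (𝒳 × 𝒴)) : 0 ≤ nbrRoot μ p :=
  mul_nonneg (one_div_nonneg.2 (meanDeg_nonneg hμ))
    (tsum_nonneg fun _ ↦ mul_nonneg (hμ _) (Nat.cast_nonneg _))

theorem nbrRoot_pos (hμ : ∀ τ, 0 ≤ μ τ) (hdeg : Summable fun τ ↦ μ τ * (deg τ : ℝ))
    {τ : T1 𝒳 𝒴} (hτ : 0 < μ τ) {s : 𝒳 × 𝒴 × 𝒴} (hs : s ∈ τ.2) :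
    0 < nbrRoot μ ((s.1, s.2.1), (τ.1, s.2.2)) := by
  have hτdeg : 0 < deg τ := Multiset.card_pos_iff_exists_mem.2 ⟨s, hs⟩
  refine mul_pos (one_div_pos.2 (meanDeg_pos hμ hdeg hτ hτdeg)) ?_
  exact (summable_mul_count hμ hdeg τ.1 s).tsum_pos
    (fun _ ↦ mul_nonneg (hμ _) (Nat.cast_nonneg _)) τ.2
    (mul_pos hτ (Nat.cast_pos.2 (Multiset.count_pos.2 hs)))

variable [Fintype 𝒳] [Fintype 𝒴]

theorem marg1_pos (hμ : ∀ τ, 0 ≤ μ τ) (hdeg : Summable fun τ ↦ μ τ * (deg τ : ℝ))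
    {τ : T1 𝒳 𝒴} (hτ : 0 < μ τ) {s : 𝒳 × 𝒴 × 𝒴} (hs : s ∈ τ.2) :
    0 < marg1 μ (s.1, s.2.1) :=
  Finset.sum_pos' (fun _ _ ↦ nbrRoot_nonneg hμ _)
    ⟨(τ.1, s.2.2), Finset.mem_univ _, nbrRoot_pos hμ hdeg hτ hs⟩

theorem margO_pos (hμ : ∀ τ, 0 ≤ μ τ) (hdeg : Summable fun τ ↦ μ τ * (deg τ : ℝ))
    {τ : T1 𝒳 𝒴} (hτ : 0 < μ τ) {s : 𝒳 × 𝒴 × 𝒴} (hs : s ∈ τ.2) :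
    0 < margO μ (τ.1, s.2.2) :=
  Finset.sum_pos' (fun _ _ ↦ nbrRoot_nonneg hμ _)
    ⟨(s.1, s.2.1), Finset.mem_univ _, nbrRoot_pos hμ hdeg hτ hs⟩

theorem condNbr_pos (hμ : ∀ τ, 0 ≤ μ τ) (hdeg : Summable fun τ ↦ μ τ * (deg τ : ℝ))
    {τ : T1 𝒳 𝒴} (hτ : 0 < μ τ) {s : 𝒳 × 𝒴 × 𝒴} (hs : s ∈ τ.2) :
    0 < condNbr μ (s.1, s.2.1) (τ.1, s.2.2) := by
  have hO := margO_pos hμ hdeg hτ hs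
  rw [condNbr, if_pos hO]
  exact div_pos (nbrRoot_pos hμ hdeg hτ hs) hO

end Marginals

section IIDMarks

variable {𝒳 𝒴 : Type} {ν : 𝒳 → ℝ} {ξ : 𝒴 × 𝒴 → ℝ} {Q : ℕ → ℝ}

/-- Weight `ν a · ξ̄(y, y')` of the neighbor `(a, y, y')`: the law of a single neighbor
under `η₁`. -/
def nbrWeight (ν : 𝒳 → ℝ) (ξ : 𝒴 × 𝒴 → ℝ) (s : 𝒳 × 𝒴 × 𝒴) : ℝ :=
  ν s.1 * xiBar ξ s.2.1 s.2.2

theorem nbrWeight_nonneg (hν : ∀ x, 0 ≤ ν x) (hξ : ∀ p, 0 ≤ ξ p) (s : 𝒳 × 𝒴 × 𝒴) :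
    0 ≤ nbrWeight ν ξ s :=
  mul_nonneg (hν _) (div_nonneg (add_nonneg (hξ _) (hξ _)) zero_le_two)

theorem sum_xiBar [Fintype 𝒴] (ξ : 𝒴 × 𝒴 → ℝ) :
    ∑ p : 𝒴 × 𝒴, xiBar ξ p.1 p.2 = ∑ p, ξ p := by
  have hswap : ∑ p : 𝒴 × 𝒴, ξ (p.2, p.1) = ∑ p, ξ p := (Equiv.prodComm 𝒴 𝒴).sum_comp ξ
  simp only [xiBar, ← Finset.sum_div, Finset.sum_add_distrib, hswap, add_self_div_two]

theorem sum_nbrWeight [Fintype 𝒳] [Fintype 𝒴] (ν : 𝒳 → ℝ) (ξ : 𝒴 × 𝒴 → ℝ) :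
    ∑ s, nbrWeight ν ξ s = (∑ x, ν x) * ∑ p, ξ p := by
  rw [← sum_xiBar, Fintype.sum_mul_sum, Fintype.sum_prod_type]
  rfl

variable [DecidableEq 𝒳] [DecidableEq 𝒴]

theorem ordCoeff_eq_countPerms (m : Multiset (𝒳 × 𝒴 × 𝒴)) : ordCoeff m = m.countPerms := by
  have hne : (∏ s ∈ m.toFinset, ((m.count s).factorial : ℝ)) ≠ 0 :=
    Finset.prod_ne_zero_iff.2 fun s _ ↦ Nat.cast_ne_zero.2 (Nat.factorial_ne_zero _)
  rw [ordCoeff, div_eq_iff hne, mul_comm]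
  exact_mod_cast (prod_factorial_count_mul_countPerms m).symm

theorem eta1_eq_mul_countPerms (ν : 𝒳 → ℝ) (ξ : 𝒴 × 𝒴 → ℝ) (Q : ℕ → ℝ) (τ : T1 𝒳 𝒴) :
    eta1 ν ξ Q τ = ν τ.1 * (Q (deg τ) * (τ.2.countPerms * (τ.2.map (nbrWeight ν ξ)).prod)) := by
  rw [eta1, ordCoeff_eq_countPerms, mul_assoc, mul_assoc]
  rfl

theorem eta1_nonneg (hν : ∀ x, 0 ≤ ν x) (hξ : ∀ p, 0 ≤ ξ p) (hQ : ∀ k, 0 ≤ Q k)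
    (τ : T1 𝒳 𝒴) : 0 ≤ eta1 ν ξ Q τ := by
  rw [eta1_eq_mul_countPerms]
  exact mul_nonneg (hν _) (mul_nonneg (hQ _) (mul_nonneg (Nat.cast_nonneg _)
    (Multiset.prod_map_nonneg fun s _ ↦ nbrWeight_nonneg hν hξ s)))

theorem summable_eta1_mul_deg [Fintype 𝒳] [Fintype 𝒴] (hν : ∀ x, 0 ≤ ν x) (hξ : ∀ p, 0 ≤ ξ p)
    (hQ : ∀ k, 0 ≤ Q k)
    (hmean : Summable fun k : ℕ ↦ (k : ℝ) * Q k * ((∑ x, ν x) * ∑ p, ξ p) ^ k) :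
    Summable fun τ : T1 𝒳 𝒴 ↦ eta1 ν ξ Q τ * (deg τ : ℝ) := by
  have hw := nbrWeight_nonneg hν hξ
  have hkQ (k : ℕ) : 0 ≤ (k : ℝ) * Q k := mul_nonneg (Nat.cast_nonneg _) (hQ k)
  rw [← sum_nbrWeight] at hmean
  have hnbrs := (summable_mul_countPerms_mul_prod_map_iff hw hkQ).2 hmean
  refine ((Summable.of_finite (f := ν)).mul_of_nonneg hnbrs hν fun _ ↦ ?_).congr fun τ ↦ ?_
  · exact mul_nonneg (hkQ _) (mul_nonneg (Nat.cast_nonneg _)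
      (Multiset.prod_map_nonneg fun s _ ↦ hw s))
  · rw [eta1_eq_mul_countPerms, deg]
    ring

end IIDMarks

section Tilting

variable {𝒳 𝒴 : Type} [Fintype 𝒳] [Fintype 𝒴] [DecidableEq 𝒳] [DecidableEq 𝒴]

/-- The measure `μ̌` relative to an arbitrary reference law `η` in place of `η₁`: each neighbor
contributes the ratio of the first marginals. As in `muCheck`, a ratio with zero denominator
is `0`. -/
def marg1Tilt (η μ : T1 𝒳 𝒴 → ℝ) (τ : T1 𝒳 𝒴) : ℝ :=
  η τ * (τ.2.map fun s ↦ marg1 μ (s.1, s.2.1) / marg1 η (s.1, s.2.1)).prod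

/-- The measure `μ̂` relative to an arbitrary reference law `η` in place of `η₁`: each neighbor
contributes the ratio of the conditional laws given the root. As in `muHat`, a ratio with zero
denominator is `0`. -/
def condNbrTilt (η μ : T1 𝒳 𝒴 → ℝ) (τ : T1 𝒳 𝒴) : ℝ :=
  η τ * (τ.2.map fun s ↦
    condNbr μ (s.1, s.2.1) (τ.1, s.2.2) / condNbr η (s.1, s.2.1) (τ.1, s.2.2)).prod

theorem mu_absolutelyContinuous_muCheck_muHat_general {η μ : T1 𝒳 𝒴 → ℝ}
    (hη : ∀ τ, 0 ≤ η τ) (hηdeg : Summable fun τ ↦ η τ * (deg τ : ℝ))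
    (hμ : ∀ τ, 0 ≤ μ τ) (hμdeg : Summable fun τ ↦ μ τ * (deg τ : ℝ))
    (habs : ∀ τ, η τ = 0 → μ τ = 0) :
    (∀ τ, marg1Tilt η μ τ = 0 → μ τ = 0) ∧ (∀ τ, condNbrTilt η μ τ = 0 → μ τ = 0) := by
  have hμpos {τ : T1 𝒳 𝒴} (hτ : μ τ ≠ 0) : 0 < μ τ := (hμ τ).lt_of_ne' hτ
  have hηpos {τ : T1 𝒳 𝒴} (hτ : μ τ ≠ 0) : 0 < η τ := (hη τ).lt_of_ne' (mt (habs τ) hτ)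
  constructor <;> intro τ <;> contrapose <;> intro hτ
  · exact mul_prod_map_div_ne_zero (hηpos hτ).ne'
      (fun s hs ↦ (marg1_pos hμ hμdeg (hμpos hτ) hs).ne')
      (fun s hs ↦ (marg1_pos hη hηdeg (hηpos hτ) hs).ne')
  · exact mul_prod_map_div_ne_zero (hηpos hτ).ne'
      (fun s hs ↦ (condNbr_pos hμ hμdeg (hμpos hτ) hs).ne')
      (fun s hs ↦ (condNbr_pos hη hηdeg (hηpos hτ) hs).ne')

end Tilting

/-- **Absolute continuity of `μ` with respect to `μ̌` and `μ̂`.**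
If `μ` is a pmf on `T1` with mean degree `β ∈ (0, ∞)`, `η₁` is the law with degree
distribution `Q` and i.i.d. marks, and `μ ≪ η₁`, then `μ ≪ μ̌` and `μ ≪ μ̂`:
for every `τ`, `μ̌ τ = 0` implies `μ τ = 0`, and `μ̂ τ = 0` implies `μ τ = 0`. -/
theorem mu_absolutelyContinuous_muCheck_muHat
    {𝒳 𝒴 : Type} [Fintype 𝒳] [Fintype 𝒴] [DecidableEq 𝒳] [DecidableEq 𝒴]
    (ν : 𝒳 → ℝ) (hν0 : ∀ x, 0 ≤ ν x) (hν1 : ∑ x, ν x = 1)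
    (ξ : 𝒴 × 𝒴 → ℝ) (hξ0 : ∀ p, 0 ≤ ξ p) (hξ1 : ∑ p : 𝒴 × 𝒴, ξ p = 1)
    (Q : ℕ → ℝ) (hQ0 : ∀ k, 0 ≤ Q k) (hQ1 : HasSum Q 1)
    (hQm : Summable fun k : ℕ => (k : ℝ) * Q k)
    (hQpos : 0 < ∑' k : ℕ, (k : ℝ) * Q k)
    (μ : T1 𝒳 𝒴 → ℝ) (hμ0 : ∀ τ, 0 ≤ μ τ) (hμ1 : HasSum μ 1)
    (hβfin : Summable fun τ : T1 𝒳 𝒴 => μ τ * (deg τ : ℝ))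
    (hβpos : 0 < meanDeg μ)
    (habs : ∀ τ, eta1 ν ξ Q τ = 0 → μ τ = 0) :
    (∀ τ : T1 𝒳 𝒴, muCheck ν ξ Q μ τ = 0 → μ τ = 0) ∧
      (∀ τ : T1 𝒳 𝒴, muHat ν ξ Q μ τ = 0 → μ τ = 0) :=
  mu_absolutelyContinuous_muCheck_muHat_general (eta1_nonneg hν0 hξ0 hQ0)
    (summable_eta1_mul_deg hν0 hξ0 hQ0 (by simpa [hν1, hξ1] using hQm)) hμ0 hβfin habs
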